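/- Let x, y, σ ∈ ℂ with Re x > 0, Re y > 0, and |Re σ| < 1/4. Then U(1/2, 1, x+y) = (e^{(x+y)/2} / (2^{1/2} π^{3/2} i)) ∫_{σ−i∞}^{σ+i∞} Γ(1/4 − s) Γ(1/4 + s) D_{2s−1/2}(√(2x)) D_{−2s−1/2}(√(2y)) ds, where √(2x), √(2y) are principal square roots. (Note that for s on the contour, Re(2s − 1/2) < 0 and Re(−2s − 1/2) < 0, and Re((√(2x))²/2) = Re x > 0, so the parabolic cylinder functions are in the domain of the stated representation.) -/

import Mathlib

/-- Confluent hypergeometric function of the second kind via its Laplace-transform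
representation, valid for `Re a > 0`, `Re z > 0` (principal branch powers). -/
noncomputable def hypU (a b z : ℂ) : ℂ :=
  (Complex.Gamma a)⁻¹ *
    ∫ t in Set.Ioi (0 : ℝ), Complex.exp (-z * t) * (t : ℂ) ^ (a - 1) * ((1 : ℂ) + t) ^ (b - a - 1)

/-- Parabolic cylinder function `D_ν(z) = 2^{ν/2} e^{-z²/4} U(-ν/2, 1/2, z²/2)`,
valid for `Re ν < 0`, `Re(z²) > 0` (principal branch powers). -/
noncomputable def parD (ν z : ℂ) : ℂ :=
  (2 : ℂ) ^ (ν / 2) * Complex.exp (-z ^ 2 / 4) * hypU (-ν / 2) (1 / 2) (z ^ 2 / 2)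

/-! In the variable `v = 1 + 1/t`, the Laplace integral of `Γ(a - s) U(a - s, b, x)` is the Mellin
transform at `s` of a function on `(1, ∞)` that does not depend on `s`. Integrating by parts twice
shows that it is `O(|s|⁻²)` on vertical lines, so Mellin inversion applies. Insert the Laplace
integral, in a variable `u`, of `Γ(a' + s) U(a' + s, b', y)` and exchange the integrals: the inner
contour integral is the inversion formula at `v = 1 + 1/u`, and what remains is the Laplace integral
of `Γ(a + a') U(a + a', b + b', x + y)`. For parabolic cylinder functions `b = b' = 1/2`; a contour
through `σ` is moved to the imaginary axis by absorbing `σ` into `a` and `a'`. -/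

open MeasureTheory Set

/-- The integrand `e^{-zt} t^{a-1} (1+t)^{b-a-1}` of the Laplace representation of
`Γ(a) U(a, b, z)`. -/
noncomputable def hypUKernel (a b z : ℂ) (t : ℝ) : ℂ :=
  Complex.exp (-z * t) * (t : ℂ) ^ (a - 1) * ((1 : ℂ) + t) ^ (b - a - 1)

/-- The unnormalized function `Γ(a) U(a, b, z)`, as its Laplace integral. -/
noncomputable def hypUIntegral (a b z : ℂ) : ℂ := ∫ t in Ioi (0 : ℝ), hypUKernel a b z t

lemma Gamma_mul_hypU {a : ℂ} (ha : 0 < a.re) (b z : ℂ) :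
    Complex.Gamma a * hypU a b z = hypUIntegral a b z :=
  mul_inv_cancel_left₀ (Complex.Gamma_ne_zero_of_re_pos ha) _

lemma one_add_ofReal_ne_zero {t : ℝ} (ht : 0 < t) : (1 : ℂ) + t ≠ 0 := by
  exact_mod_cast (by positivity : (1 : ℝ) + t ≠ 0)

section Kernel

variable {a z : ℂ} {t : ℝ}

lemma norm_hypUKernel (a b z : ℂ) (ht : 0 < t) :
    ‖hypUKernel a b z t‖ =
      Real.exp (-z.re * t) * t ^ (a.re - 1) * (1 + t) ^ (b.re - a.re - 1) := by
  have h : (1 : ℂ) + t = ((1 + t : ℝ) : ℂ) := by push_cast; rfl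
  rw [hypUKernel, h, norm_mul, norm_mul, Complex.norm_exp, Complex.norm_cpow_eq_rpow_re_of_pos ht,
    Complex.norm_cpow_eq_rpow_re_of_pos (by positivity)]
  simp

lemma norm_hypUKernel_congr {a' : ℂ} (h : a.re = a'.re) (b z : ℂ) (ht : 0 < t) :
    ‖hypUKernel a b z t‖ = ‖hypUKernel a' b z t‖ := by
  rw [norm_hypUKernel a b z ht, norm_hypUKernel a' b z ht, h]

@[fun_prop]
lemma measurable_hypUKernel {α : Type*} [MeasurableSpace α] {f : α → ℂ} {g : α → ℝ}
    (hf : Measurable f) (hg : Measurable g) (b z : ℂ) :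
    Measurable fun p => hypUKernel (f p) b z (g p) := by
  unfold hypUKernel
  fun_prop

lemma one_add_rpow_le (ht : 0 ≤ t) (p : ℝ) : (1 + t) ^ p ≤ 2 ^ |p| * (1 + t ^ |p|) := by
  have hmax : 1 + t ≤ 2 * max 1 t := by linarith [le_max_left 1 t, le_max_right 1 t]
  calc (1 + t) ^ p ≤ (1 + t) ^ |p| :=
        Real.rpow_le_rpow_of_exponent_le (by linarith) (le_abs_self p)
    _ ≤ (2 * max 1 t) ^ |p| := by gcongr
    _ = 2 ^ |p| * max 1 t ^ |p| := Real.mul_rpow zero_le_two (by positivity)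
    _ ≤ 2 ^ |p| * (1 + t ^ |p|) := by
        gcongr
        rcases max_choice 1 t with h | h <;> rw [h]
        · simpa using Real.rpow_nonneg ht |p|
        · simp

lemma integrableOn_hypUKernel (ha : 0 < a.re) (b : ℂ) (hz : 0 < z.re) :
    IntegrableOn (hypUKernel a b z) (Ioi 0) := by
  set p := b.re - a.re - 1
  have hpow {q : ℝ} (hq : 0 ≤ q) :
      IntegrableOn (fun t : ℝ => t ^ (a.re - 1 + q) * Real.exp (-z.re * t)) (Ioi 0) := by
    simpa using integrableOn_rpow_mul_exp_neg_mul_rpow (s := a.re - 1 + q) (by linarith) one_pos hz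
  refine (((hpow le_rfl).add (hpow (abs_nonneg p))).const_mul (2 ^ |p|)).mono'
    (by fun_prop) ?_
  filter_upwards [ae_restrict_mem measurableSet_Ioi] with t (ht : 0 < t)
  calc ‖hypUKernel a b z t‖ = Real.exp (-z.re * t) * t ^ (a.re - 1) * (1 + t) ^ p :=
        norm_hypUKernel a b z ht
    _ ≤ Real.exp (-z.re * t) * t ^ (a.re - 1) * (2 ^ |p| * (1 + t ^ |p|)) := by
        gcongr
        exact one_add_rpow_le ht.le p
    _ = _ := by
        simp only [Pi.add_apply, Real.rpow_add ht, Real.rpow_zero]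
        ring

lemma hypUKernel_mul (a b z a' b' z' : ℂ) (ht : 0 < t) :
    hypUKernel a b z t * hypUKernel a' b' z' t =
      hypUKernel (a + a' - 1) (b + b' - 2) (z + z') t := by
  have hexp : -(z + z') * t = -z * t + -z' * t := by ring
  have ht_exponent : a + a' - 1 - 1 = (a - 1) + (a' - 1) := by ring
  have h1t_exponent : b + b' - 2 - (a + a' - 1) - 1 = (b - a - 1) + (b' - a' - 1) := by ring
  simp only [hypUKernel]
  rw [hexp, Complex.exp_add, ht_exponent, h1t_exponent,
    Complex.cpow_add _ _ (Complex.ofReal_ne_zero.2 ht.ne'),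
    Complex.cpow_add _ _ (one_add_ofReal_ne_zero ht)]
  ring

lemma hypUKernel_apply_zero (ha : a ≠ 1) (b z : ℂ) : hypUKernel a b z 0 = 0 := by
  simp [hypUKernel, Complex.zero_cpow (sub_ne_zero.2 ha)]

lemma continuousAt_hypUKernel_zero (ha : 1 < a.re) (b z : ℂ) :
    ContinuousAt (hypUKernel a b z) 0 := by
  unfold hypUKernel
  refine ((by fun_prop : ContinuousAt _ _).mul
    (Complex.continuousAt_ofReal_cpow_const 0 (a - 1) (Or.inl (by simpa using ha)))).mul
    (ContinuousAt.cpow (by fun_prop) (by fun_prop) (by simp))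


lemma hypUKernel_add_one_right (a b z : ℂ) (ht : 0 < t) :
    hypUKernel a (b + 1) z t = hypUKernel a b z t + hypUKernel (a + 1) (b + 1) z t := by
  have hb : b + 1 - a - 1 = (b - a - 1) + 1 := by ring
  have hb' : b + 1 - (a + 1) - 1 = b - a - 1 := by ring
  have ha : a + 1 - 1 = (a - 1) + 1 := by ring
  simp only [hypUKernel]
  rw [hb, hb', ha, Complex.cpow_add _ _ (one_add_ofReal_ne_zero ht),
    Complex.cpow_add _ _ (Complex.ofReal_ne_zero.2 ht.ne'), Complex.cpow_one, Complex.cpow_one]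
  ring

lemma hasDerivAt_hypUKernel (a b z : ℂ) (ht : 0 < t) :
    HasDerivAt (hypUKernel (a + 1) (b + 2) z)
      (a * hypUKernel a b z t + b * hypUKernel (a + 1) (b + 1) z t
        - z * hypUKernel (a + 1) (b + 2) z t) t := by
  have hexp : HasDerivAt (fun w : ℂ => Complex.exp (-z * w))
      (Complex.exp (-z * t) * -z) (t : ℂ) := by
    simpa using ((hasDerivAt_id (t : ℂ)).const_mul (-z)).cexp
  have hpow : HasDerivAt (fun w : ℂ => w ^ a) (a * (t : ℂ) ^ (a - 1)) (t : ℂ) := by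
    simpa using (hasDerivAt_id (t : ℂ)).cpow_const (c := a) (Or.inl (by simpa using ht))
  have hpow' : HasDerivAt (fun w : ℂ => (1 + w) ^ (b - a))
      ((b - a) * (1 + (t : ℂ)) ^ (b - a - 1)) (t : ℂ) := by
    simpa using ((hasDerivAt_id (t : ℂ)).const_add 1).cpow_const (c := b - a)
      (Or.inl (by simpa using by linarith))
  have ha : a + 1 - 1 = a := by ring
  have hb : b + 2 - (a + 1) - 1 = b - a := by ring
  have hb' : b + 1 - (a + 1) - 1 = b - a - 1 := by ring
  have hb'' : b + 1 - a - 1 = b - a := by ring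
  have hab : a * hypUKernel a b z t =
      a * hypUKernel a (b + 1) z t - a * hypUKernel (a + 1) (b + 1) z t := by
    rw [hypUKernel_add_one_right a b z ht]; ring
  rw [hab]
  unfold hypUKernel
  rw [ha, hb, hb', hb'']
  refine ((hexp.mul hpow).mul hpow').comp_ofReal.congr_deriv ?_
  simp only [Pi.mul_apply]
  ring

lemma one_add_inv_cpow_mul_hypUKernel (a b z s : ℂ) (ht : 0 < t) :
    ((1 + t⁻¹ : ℝ) : ℂ) ^ s * hypUKernel a b z t = hypUKernel (a - s) b z t := by
  have hquot : 1 + t⁻¹ = (1 + t) / t := by field_simp; ring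
  have ha : a - s - 1 = (a - 1) - s := by ring
  have hb : b - (a - s) - 1 = (b - a - 1) + s := by ring
  simp only [hypUKernel]
  rw [hquot, Complex.ofReal_div, Complex.div_cpow_ofReal_nonneg (by positivity) ht.le, ha, hb,
    Complex.cpow_sub (a - 1) s (Complex.ofReal_ne_zero.2 ht.ne'),
    Complex.cpow_add _ s (one_add_ofReal_ne_zero ht)]
  push_cast
  ring

lemma inv_sq_smul_hypUKernel (a b z : ℂ) (ht : 0 < t) :
    (t ^ 2)⁻¹ • hypUKernel (a + 2) (b + 2) z t = hypUKernel a b z t := by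
  have ht₀ : (t : ℂ) ≠ 0 := Complex.ofReal_ne_zero.2 ht.ne'
  have ha : a + 2 - 1 = (a - 1) + (2 : ℕ) := by push_cast; ring
  have hb : b + 2 - (a + 2) - 1 = b - a - 1 := by ring
  simp only [hypUKernel]
  rw [ha, hb, Complex.cpow_add _ _ ht₀, Complex.cpow_natCast, Complex.real_smul]
  push_cast
  field_simp

end Kernel

section Decay

variable {a z : ℂ}

lemma mul_hypUIntegral (ha : 0 < a.re) (b : ℂ) (hz : 0 < z.re) :
    a * hypUIntegral a b z =
      z * hypUIntegral (a + 1) (b + 2) z - b * hypUIntegral (a + 1) (b + 1) z := by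
  have ha' : 0 < (a + 1).re := add_pos ha one_pos
  have h₀ := (integrableOn_hypUKernel ha b hz).const_mul a
  have h₁ := (integrableOn_hypUKernel ha' (b + 1) hz).const_mul b
  have h₂ := integrableOn_hypUKernel ha' (b + 2) hz
  have h₂z := h₂.const_mul z
  have hderiv : ∀ t ∈ Ioi (0 : ℝ), HasDerivAt (hypUKernel (a + 1) (b + 2) z) _ t :=
    fun t ht => hasDerivAt_hypUKernel a b z ht
  have hint := (h₀.add h₁).sub h₂z
  have hboundary := integral_Ioi_of_hasDerivAt_of_tendsto
    (continuousAt_hypUKernel_zero (by simpa using ha) (b + 2) z).continuousWithinAt hderiv hint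
    (tendsto_zero_of_hasDerivAt_of_integrableOn_Ioi hderiv hint h₂)
  have ha₁ : a + 1 ≠ 1 := fun h => by simp [add_eq_right.1 h] at ha
  rw [hypUKernel_apply_zero ha₁, integral_sub (by exact h₀.add h₁) h₂z, integral_add h₀ h₁,
    integral_const_mul, integral_const_mul, integral_const_mul] at hboundary
  unfold hypUIntegral
  linear_combination hboundary

lemma norm_hypUIntegral_le_of_re_eq {a' : ℂ} (h : a.re = a'.re) (b z : ℂ) :
    ‖hypUIntegral a b z‖ ≤ ∫ t in Ioi (0 : ℝ), ‖hypUKernel a' b z t‖ :=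
  (norm_integral_le_integral_norm _).trans_eq <|
    setIntegral_congr_fun measurableSet_Ioi fun _ ht => norm_hypUKernel_congr h b z ht

lemma mul_add_one_mul_hypUIntegral (ha : 0 < a.re) (b : ℂ) (hz : 0 < z.re) :
    a * (a + 1) * hypUIntegral a b z =
      z ^ 2 * hypUIntegral (a + 2) (b + 4) z - 2 * (b + 1) * z * hypUIntegral (a + 2) (b + 3) z
        + b * (b + 1) * hypUIntegral (a + 2) (b + 2) z := by
  have ha' : 0 < (a + 1).re := add_pos ha one_pos
  have h₀ := mul_hypUIntegral ha b hz
  have h₁ : (a + 1) * hypUIntegral (a + 1) (b + 1) z =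
      z * hypUIntegral (a + 2) (b + 3) z - (b + 1) * hypUIntegral (a + 2) (b + 2) z := by
    convert mul_hypUIntegral ha' (b + 1) hz using 4 <;> ring
  have h₂ : (a + 1) * hypUIntegral (a + 1) (b + 2) z =
      z * hypUIntegral (a + 2) (b + 4) z - (b + 2) * hypUIntegral (a + 2) (b + 3) z := by
    convert mul_hypUIntegral ha' (b + 2) hz using 4 <;> ring
  linear_combination (a + 1) * h₀ - b * h₁ + z * h₂

lemma min_re_sq_mul_one_add_im_sq_le_norm (ha : 0 ≤ a.re) :
    min 1 (a.re ^ 2) * (1 + a.im ^ 2) ≤ ‖a * (a + 1)‖ := by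
  have hle : ‖a‖ ≤ ‖a + 1‖ := by
    rw [← sq_le_sq₀ (norm_nonneg _) (norm_nonneg _), Complex.sq_norm, Complex.sq_norm,
      Complex.normSq_apply, Complex.normSq_apply]
    simp only [Complex.add_re, Complex.one_re, Complex.add_im, Complex.one_im, add_zero]
    nlinarith
  calc min 1 (a.re ^ 2) * (1 + a.im ^ 2)
      = min 1 (a.re ^ 2) + min 1 (a.re ^ 2) * a.im ^ 2 := by ring
    _ ≤ a.re ^ 2 + 1 * a.im ^ 2 := by gcongr <;> simp
    _ = ‖a‖ * ‖a‖ := by rw [← sq, Complex.sq_norm, Complex.normSq_apply]; ring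
    _ ≤ ‖a * (a + 1)‖ := by rw [norm_mul]; gcongr

lemma exists_norm_hypUIntegral_le {r : ℝ} (hr : 0 < r) (b : ℂ) (hz : 0 < z.re) :
    ∃ C, ∀ a : ℂ, a.re = r → ‖hypUIntegral a b z‖ ≤ C * (1 + a.im ^ 2)⁻¹ := by
  let M (b' : ℂ) := ∫ t in Ioi (0 : ℝ), ‖hypUKernel (r + 2) b' z t‖
  let C := ‖z ^ 2‖ * M (b + 4) + ‖2 * (b + 1) * z‖ * M (b + 3) + ‖b * (b + 1)‖ * M (b + 2)
  refine ⟨C / min 1 (r ^ 2), fun a ha => ?_⟩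
  have hM (b' : ℂ) : ‖hypUIntegral (a + 2) b' z‖ ≤ M b' :=
    norm_hypUIntegral_le_of_re_eq (by simp [ha]) b' z
  have hbound : ‖a * (a + 1)‖ * ‖hypUIntegral a b z‖ ≤ C := by
    rw [← norm_mul, mul_add_one_mul_hypUIntegral (ha ▸ hr) b hz]
    refine (norm_add_le _ _).trans (add_le_add ((norm_sub_le _ _).trans (add_le_add ?_ ?_)) ?_) <;>
    · rw [norm_mul]
      gcongr
      exact hM _
  have hgrowth := min_re_sq_mul_one_add_im_sq_le_norm (a := a) (ha ▸ hr.le)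
  rw [ha] at hgrowth
  rw [← div_eq_mul_inv, div_div, le_div_iff₀' (by positivity)]
  exact (mul_le_mul_of_nonneg_right hgrowth (norm_nonneg _)).trans hbound

lemma integrable_hypUIntegral_vertical (ha : 0 < a.re) (b : ℂ) (hz : 0 < z.re) :
    Integrable fun τ : ℝ => hypUIntegral (a - τ * Complex.I) b z := by
  obtain ⟨C, hC⟩ := exists_norm_hypUIntegral_le ha b hz
  have hmeas : StronglyMeasurable fun τ : ℝ => hypUIntegral (a - τ * Complex.I) b z := by
    refine StronglyMeasurable.integral_prod_right (Measurable.stronglyMeasurable ?_)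
    fun_prop
  refine ((integrable_inv_one_add_sq.comp_sub_left a.im).const_mul C).mono'
    hmeas.aestronglyMeasurable (.of_forall fun τ => ?_)
  simpa using hC (a - τ * Complex.I) (by simp)

end Decay

section ChangeOfVariables

variable {E : Type*} [NormedAddCommGroup E] [NormedSpace ℝ E]

lemma image_one_add_inv_Ioi : (fun t : ℝ => 1 + t⁻¹) '' Ioi 0 = Ioi 1 := by
  ext v
  constructor
  · rintro ⟨t, ht, rfl⟩
    simpa using ht
  · intro hv
    exact ⟨(v - 1)⁻¹, inv_pos.2 (sub_pos.2 hv : 0 < v - 1), by simp⟩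

lemma hasDerivAt_one_add_inv {t : ℝ} (ht : t ≠ 0) :
    HasDerivAt (fun t : ℝ => 1 + t⁻¹) (-(t ^ 2)⁻¹) t :=
  (hasDerivAt_inv ht).const_add 1

lemma injective_one_add_inv : Function.Injective fun t : ℝ => 1 + t⁻¹ :=
  (add_right_injective 1).comp inv_injective

lemma integral_Ioi_one_eq_integral_comp_one_add_inv (f : ℝ → E) :
    ∫ v in Ioi 1, f v = ∫ t in Ioi 0, (t ^ 2)⁻¹ • f (1 + t⁻¹) := by
  rw [← image_one_add_inv_Ioi, integral_image_eq_integral_abs_deriv_smul measurableSet_Ioi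
    (fun t ht => (hasDerivAt_one_add_inv (ne_of_gt ht)).hasDerivWithinAt)
    injective_one_add_inv.injOn]
  simp

lemma integrableOn_Ioi_one_iff_comp_one_add_inv (f : ℝ → E) :
    IntegrableOn f (Ioi 1) ↔ IntegrableOn (fun t => (t ^ 2)⁻¹ • f (1 + t⁻¹)) (Ioi 0) := by
  rw [← image_one_add_inv_Ioi, integrableOn_image_iff_integrableOn_abs_deriv_smul measurableSet_Ioi
    (fun t ht => (hasDerivAt_one_add_inv (ne_of_gt ht)).hasDerivWithinAt)
    injective_one_add_inv.injOn]
  simp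

end ChangeOfVariables

section MellinInversion

variable {a z : ℂ}

/-- The function on `(1, ∞)` whose Mellin transform is `s ↦ Γ(a - s) U(a - s, b, z)`. It is the
integrand in the variable `v = 1 + 1/t`, because `t^{a-s-1} (1+t)^{b-a+s-1}` depends on `s` only
through the factor `v^s`. -/
noncomputable def hypUMellinKernel (a b z : ℂ) : ℝ → ℂ :=
  indicator (Ioi 1) fun v => hypUKernel (a + 1) (b + 2) z (v - 1)⁻¹

lemma hypUMellinKernel_one_add_inv (a b z : ℂ) {t : ℝ} (ht : 0 < t) :
    hypUMellinKernel a b z (1 + t⁻¹) = hypUKernel (a + 1) (b + 2) z t := by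
  simp [hypUMellinKernel, ht]

lemma cpow_smul_hypUMellinKernel (a b z s : ℂ) :
    (fun v : ℝ => (v : ℂ) ^ (s - 1) • hypUMellinKernel a b z v) =
      indicator (Ioi 1) fun v : ℝ => (v : ℂ) ^ (s - 1) • hypUMellinKernel a b z v := by
  rw [hypUMellinKernel, ← indicator_smul, indicator_indicator, inter_self]

lemma inv_sq_smul_cpow_smul_hypUMellinKernel (a b z s : ℂ) {t : ℝ} (ht : 0 < t) :
    (t ^ 2)⁻¹ • ((1 + t⁻¹ : ℝ) : ℂ) ^ (s - 1) • hypUMellinKernel a b z (1 + t⁻¹) =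
      hypUKernel (a - s) b z t := by
  have ha : a + 1 - (s - 1) = a - s + 2 := by ring
  rw [hypUMellinKernel_one_add_inv a b z ht, smul_eq_mul,
    one_add_inv_cpow_mul_hypUKernel _ _ _ _ ht, ha, inv_sq_smul_hypUKernel _ _ _ ht]

lemma mellin_hypUMellinKernel (a b z s : ℂ) :
    mellin (hypUMellinKernel a b z) s = hypUIntegral (a - s) b z := by
  rw [mellin, cpow_smul_hypUMellinKernel, setIntegral_indicator measurableSet_Ioi,
    inter_eq_self_of_subset_right (Ioi_subset_Ioi zero_le_one),
    integral_Ioi_one_eq_integral_comp_one_add_inv]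
  exact setIntegral_congr_fun measurableSet_Ioi fun t ht =>
    inv_sq_smul_cpow_smul_hypUMellinKernel a b z s ht

lemma mellinConvergent_hypUMellinKernel {s : ℂ} (hs : s.re < a.re) (b : ℂ) (hz : 0 < z.re) :
    MellinConvergent (hypUMellinKernel a b z) s := by
  rw [MellinConvergent, cpow_smul_hypUMellinKernel]
  refine ((integrable_indicator_iff measurableSet_Ioi).2 ?_).integrableOn
  rw [integrableOn_Ioi_one_iff_comp_one_add_inv]
  exact (integrableOn_hypUKernel (by simpa using hs) b hz).congr_fun
    (fun t ht => (inv_sq_smul_cpow_smul_hypUMellinKernel a b z s ht).symm) measurableSet_Ioi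

lemma continuousAt_hypUMellinKernel (a b z : ℂ) {v : ℝ} (hv : 1 < v) :
    ContinuousAt (hypUMellinKernel a b z) v := by
  have hv' : 0 < (v - 1)⁻¹ := inv_pos.2 (sub_pos.2 hv)
  have hcomp : ContinuousAt (fun v : ℝ => hypUKernel (a + 1) (b + 2) z (v - 1)⁻¹) v :=
    ContinuousAt.comp (g := hypUKernel (a + 1) (b + 2) z)
      (hasDerivAt_hypUKernel a b z hv').continuousAt
      (ContinuousAt.inv₀ (by fun_prop) (sub_pos.2 hv).ne')
  refine hcomp.congr ?_
  filter_upwards [Ioi_mem_nhds hv] with w hw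
  simp [hypUMellinKernel, mem_Ioi.1 hw]

lemma integral_one_add_inv_cpow_mul_hypUIntegral (ha : 0 < a.re) (b : ℂ) (hz : 0 < z.re)
    {u : ℝ} (hu : 0 < u) :
    ∫ τ : ℝ, ((1 + u⁻¹ : ℝ) : ℂ) ^ (-(τ * Complex.I)) * hypUIntegral (a - τ * Complex.I) b z =
      2 * Real.pi * hypUKernel (a + 1) (b + 2) z u := by
  have hu' : 1 < 1 + u⁻¹ := by simpa using hu
  have hinv := mellinInv_mellin_eq 0 (hypUMellinKernel a b z) (by positivity)
    (mellinConvergent_hypUMellinKernel (by simpa using ha) b hz)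
    (by simpa [Complex.VerticalIntegrable, mellin_hypUMellinKernel] using
      integrable_hypUIntegral_vertical ha b hz)
    (continuousAt_hypUMellinKernel a b z hu')
  simp only [mellinInv, mellin_hypUMellinKernel, hypUMellinKernel_one_add_inv a b z hu,
    Complex.ofReal_zero, zero_add, smul_eq_mul] at hinv
  have hpi : 2 * (Real.pi : ℂ) ≠ 0 := by simp [Real.pi_ne_zero]
  rw [← hinv, one_div, Complex.real_smul, Complex.ofReal_inv, Complex.ofReal_mul,
    Complex.ofReal_ofNat, mul_inv_cancel_left₀ hpi]

end MellinInversion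

section Addition

variable {a a' x y : ℂ}

lemma integrable_hypUIntegral_mul_hypUKernel (ha : 0 < a.re) (ha' : 0 < a'.re) (b b' : ℂ)
    (hx : 0 < x.re) (hy : 0 < y.re) :
    Integrable (Function.uncurry fun τ u : ℝ =>
        hypUIntegral (a - τ * Complex.I) b x * hypUKernel (a' + τ * Complex.I) b' y u)
      (volume.prod (volume.restrict (Ioi 0))) := by
  have hint := integrable_hypUIntegral_vertical ha b hx
  refine (hint.mul_prod (integrableOn_hypUKernel ha' b' hy)).mono
    (hint.aestronglyMeasurable.comp_fst.mul
    (Measurable.aestronglyMeasurable (by fun_prop))) ?_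
  filter_upwards [Measure.quasiMeasurePreserving_snd.ae (ae_restrict_mem measurableSet_Ioi)]
    with p hp
  rw [Function.uncurry, norm_mul, norm_mul,
    norm_hypUKernel_congr (a := a' + p.1 * Complex.I) (a' := a') (by simp) b' y hp]

theorem integral_hypUIntegral_mul_hypUIntegral (ha : 0 < a.re) (ha' : 0 < a'.re) (b b' : ℂ)
    (hx : 0 < x.re) (hy : 0 < y.re) :
    ∫ τ : ℝ, hypUIntegral (a - τ * Complex.I) b x * hypUIntegral (a' + τ * Complex.I) b' y =
      2 * Real.pi * hypUIntegral (a + a') (b + b') (x + y) := by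
  have hfactor {u : ℝ} (hu : 0 < u) (τ : ℝ) :
      hypUIntegral (a - τ * Complex.I) b x * hypUKernel (a' + τ * Complex.I) b' y u =
        hypUKernel a' b' y u * (((1 + u⁻¹ : ℝ) : ℂ) ^ (-(τ * Complex.I)) *
          hypUIntegral (a - τ * Complex.I) b x) := by
    rw [← sub_neg_eq_add, ← one_add_inv_cpow_mul_hypUKernel _ _ _ _ hu]
    ring
  have hparam : a' + (a + 1) - 1 = a + a' ∧ b' + (b + 2) - 2 = b + b' := by
    constructor <;> ring
  calc ∫ τ : ℝ, hypUIntegral (a - τ * Complex.I) b x * hypUIntegral (a' + τ * Complex.I) b' y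
      = ∫ τ : ℝ, ∫ u in Ioi (0 : ℝ),
          hypUIntegral (a - τ * Complex.I) b x * hypUKernel (a' + τ * Complex.I) b' y u := by
        simp only [integral_const_mul, hypUIntegral]
    _ = ∫ u in Ioi (0 : ℝ), ∫ τ : ℝ,
          hypUIntegral (a - τ * Complex.I) b x * hypUKernel (a' + τ * Complex.I) b' y u :=
        integral_integral_swap (integrable_hypUIntegral_mul_hypUKernel ha ha' b b' hx hy)
    _ = ∫ u in Ioi (0 : ℝ), 2 * Real.pi * hypUKernel (a + a') (b + b') (x + y) u := by
        refine setIntegral_congr_fun measurableSet_Ioi fun u hu => ?_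
        simp only [hfactor hu]
        rw [integral_const_mul, integral_one_add_inv_cpow_mul_hypUIntegral ha b hx hu,
          mul_left_comm, hypUKernel_mul _ _ _ _ _ _ hu, hparam.1, hparam.2, add_comm y]
    _ = 2 * Real.pi * hypUIntegral (a + a') (b + b') (x + y) := integral_const_mul _ _

end Addition

lemma parD_two_mul_cpow_half (ν x : ℂ) :
    parD ν ((2 * x) ^ ((1 : ℂ) / 2)) =
      2 ^ (ν / 2) * Complex.exp (-x / 2) * hypU (-ν / 2) (1 / 2) x := by
  have hsq : ((2 * x) ^ ((1 : ℂ) / 2)) ^ 2 = 2 * x := by simp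
  have hexp : -(2 * x) / 4 = -x / 2 := by ring
  rw [parD, hsq, hexp, mul_div_cancel_left₀ x two_ne_zero]

lemma Gamma_mul_parD {a : ℂ} (ha : 0 < a.re) (x : ℂ) :
    Complex.Gamma a * parD (-2 * a) ((2 * x) ^ ((1 : ℂ) / 2)) =
      2 ^ (-a) * Complex.exp (-x / 2) * hypUIntegral a (1 / 2) x := by
  have hν : -2 * a / 2 = -a := by ring
  have hν' : -(-2 * a) / 2 = a := by ring
  rw [parD_two_mul_cpow_half, hν, hν', ← Gamma_mul_hypU ha]
  ring

lemma Gamma_mul_Gamma_mul_parD_mul_parD {a a' : ℂ} (ha : 0 < a.re) (ha' : 0 < a'.re) (x y : ℂ) :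
    Complex.Gamma a * Complex.Gamma a' * parD (-2 * a) ((2 * x) ^ ((1 : ℂ) / 2)) *
        parD (-2 * a') ((2 * y) ^ ((1 : ℂ) / 2)) =
      2 ^ (-(a + a')) * Complex.exp (-((x + y) / 2)) *
        (hypUIntegral a (1 / 2) x * hypUIntegral a' (1 / 2) y) := by
  have hexp : -((x + y) / 2) = -x / 2 + -y / 2 := by ring
  rw [neg_add, Complex.cpow_add _ _ two_ne_zero, hexp, Complex.exp_add]
  linear_combination (Complex.Gamma a' * parD (-2 * a') ((2 * y) ^ ((1 : ℂ) / 2))) *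
    Gamma_mul_parD ha x + (2 ^ (-a) * Complex.exp (-x / 2) * hypUIntegral a (1 / 2) x) *
    Gamma_mul_parD ha' y

theorem addition_c_half_general (x y σ c : ℂ) (hx : 0 < x.re) (hy : 0 < y.re)
    (hσ : |σ.re| < c.re / 2) :
    hypU c 1 (x + y) =
      (Complex.exp ((x + y) / 2) /
          ((2 : ℂ) ^ (1 - c) * (Real.pi * Complex.Gamma c) * Complex.I)) *
        (Complex.I * ∫ τ : ℝ,
          Complex.Gamma (c / 2 - (σ + Complex.I * τ)) *
          Complex.Gamma (c / 2 + (σ + Complex.I * τ)) *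
          parD (2 * (σ + Complex.I * τ) - c) ((2 * x) ^ ((1 : ℂ) / 2)) *
          parD (-2 * (σ + Complex.I * τ) - c) ((2 * y) ^ ((1 : ℂ) / 2))) := by
  obtain ⟨hσ₁, hσ₂⟩ := abs_lt.1 hσ
  have ha : 0 < (c / 2 - σ).re := by simpa using by linarith
  have ha' : 0 < (c / 2 + σ).re := by simpa using by linarith
  have hc : 0 < c.re := by linarith
  have hparam : c / 2 - σ + (c / 2 + σ) = c := by ring
  have hintegrand (τ : ℝ) :
      Complex.Gamma (c / 2 - (σ + Complex.I * τ)) * Complex.Gamma (c / 2 + (σ + Complex.I * τ)) *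
          parD (2 * (σ + Complex.I * τ) - c) ((2 * x) ^ ((1 : ℂ) / 2)) *
          parD (-2 * (σ + Complex.I * τ) - c) ((2 * y) ^ ((1 : ℂ) / 2)) =
        2 ^ (-c) * Complex.exp (-((x + y) / 2)) *
          (hypUIntegral (c / 2 - σ - τ * Complex.I) (1 / 2) x *
            hypUIntegral (c / 2 + σ + τ * Complex.I) (1 / 2) y) := by
    convert Gamma_mul_Gamma_mul_parD_mul_parD (a := c / 2 - σ - τ * Complex.I)
      (a' := c / 2 + σ + τ * Complex.I) (by simpa using ha) (by simpa using ha') x y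
      using 5 <;> ring
  simp only [hintegrand]
  rw [integral_const_mul, integral_hypUIntegral_mul_hypUIntegral ha ha' _ _ hx hy, hparam,
    add_halves, ← Gamma_mul_hypU hc, sub_eq_add_neg 1 c, Complex.cpow_add _ _ two_ne_zero,
    Complex.cpow_one, Complex.exp_neg]
  have hΓ : Complex.Gamma c ≠ 0 := Complex.Gamma_ne_zero_of_re_pos hc
  have h2 : (2 : ℂ) ^ (-c) ≠ 0 := by simp [Complex.cpow_eq_zero_iff]
  have hexp := Complex.exp_ne_zero ((x + y) / 2)
  have hπ : (Real.pi : ℂ) ≠ 0 := Complex.ofReal_ne_zero.2 Real.pi_ne_zero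
  field_simp

lemma pi_mul_Gamma_one_half :
    (Real.pi : ℂ) * Complex.Gamma (1 / 2) = (Real.pi : ℂ) ^ ((3 : ℂ) / 2) := by
  have hπ : (Real.pi : ℂ) ≠ 0 := Complex.ofReal_ne_zero.2 Real.pi_ne_zero
  have hexponent : (3 : ℂ) / 2 = 1 + 1 / 2 := by norm_num
  rw [Complex.Gamma_one_half_eq, hexponent, Complex.cpow_add _ _ hπ, Complex.cpow_one]

/-- Integral addition theorem (case `c = 1/2`):
`U(1/2,1,x+y) = (e^{(x+y)/2}/(2^{1/2} π^{3/2} i)) ∫_{σ-i∞}^{σ+i∞} Γ(1/4-s) Γ(1/4+s)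
D_{2s-1/2}(√(2x)) D_{-2s-1/2}(√(2y)) ds`, the contour integral being `i ∫_ℝ f(σ+iτ) dτ`. -/
theorem addition_c_half (x y σ : ℂ) (hx : 0 < x.re) (hy : 0 < y.re)
    (hσ : |σ.re| < 1 / 4) :
    hypU (1 / 2) 1 (x + y) =
      (Complex.exp ((x + y) / 2) /
          ((2 : ℂ) ^ ((1 : ℂ) / 2) * (Real.pi : ℂ) ^ ((3 : ℂ) / 2) * Complex.I)) *
        (Complex.I * ∫ τ : ℝ,
          Complex.Gamma (1 / 4 - (σ + Complex.I * τ)) *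
          Complex.Gamma (1 / 4 + (σ + Complex.I * τ)) *
          parD (2 * (σ + Complex.I * τ) - 1 / 2) ((2 * x) ^ ((1 : ℂ) / 2)) *
          parD (-2 * (σ + Complex.I * τ) - 1 / 2) ((2 * y) ^ ((1 : ℂ) / 2))) := by
  have hhalf : (1 : ℂ) - 1 / 2 = 1 / 2 ∧ (1 / 2 : ℂ) / 2 = 1 / 4 := by norm_num
  simpa only [pi_mul_Gamma_one_half, hhalf] using
    addition_c_half_general x y σ (1 / 2) hx hy (hσ.trans_eq (by norm_num))
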